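/- Let e* ∈ ℝ³ be a unit vector and let n₁, …, n_N ∈ ℝ³ be unit vectors forming the rows of N ∈ ℝ^{N×3}. Suppose the index set {1, …, N} is partitioned into a set of barrel indices, on which n_iᵀe* = 0, and a set of base indices, on which n_i = e* or n_i = −e*. Let φ^barr, φ^base ∈ ℝᴺ be weight vectors such that φ^barr_i = 0 for every base index i and φ^base_i = 0 for every barrel index i, and set H_Φ = NᵀΦ_barrᵀΦ_barr N − NᵀΦ_baseᵀΦ_base N with Φ_barr = diag(φ^barr), Φ_base = diag(φ^base). Then e*ᵀ H_Φ e* = −∑_{i=1}^N (φ^base_i)², and e*ᵀ H_Φ e* ≤ eᵀ H_Φ e for every unit vector e ∈ ℝ³; that is, the true extrusion axis e* is a global minimizer of the weighted quadratic form over the unit sphere. -/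

import Mathlib

open Matrix

/-!
Writing `nᵢ` for the rows of `A`, `eᵀ H e = ∑ (φᵢᵇᵃʳʳ)² (nᵢ · e)² - ∑ (φᵢᵇᵃˢᵉ)² (nᵢ · e)²`. On the
unit sphere the first sum is at least `0` and, by Cauchy–Schwarz, the second is at most
`∑ (φᵢᵇᵃˢᵉ)²`; the true axis attains both bounds at once.
-/

section ExtrusionMatrix

variable {m n R : Type*} [Fintype m] [DecidableEq m]

/-- The matrix `H_Φ` of the weighted quadratic form whose minimizer over the unit sphere estimates
the extrusion axis: the rows of `A` are the surface normals, `φbarr` and `φbase` their barrel and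
base weights. -/
def extrusionMatrix [CommRing R] (A : Matrix m n R) (φbarr φbase : m → R) : Matrix n n R :=
  Aᵀ * (diagonal φbarr)ᵀ * diagonal φbarr * A - Aᵀ * (diagonal φbase)ᵀ * diagonal φbase * A

variable [Fintype n]

theorem dotProduct_weighted_gram_mulVec [CommSemiring R]
    (A : Matrix m n R) (w : m → R) (e : n → R) :
    e ⬝ᵥ (Aᵀ * (diagonal w)ᵀ * diagonal w * A) *ᵥ e = ∑ i, w i ^ 2 * (A i ⬝ᵥ e) ^ 2 := by
  have hgram : Aᵀ * (diagonal w)ᵀ * diagonal w * A = (diagonal w * A)ᵀ * (diagonal w * A) := by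
    rw [transpose_mul, Matrix.mul_assoc]
  have hentry (i : m) : ((diagonal w * A) *ᵥ e) i = w i * (A i ⬝ᵥ e) := by
    rw [← mulVec_mulVec, mulVec_diagonal, mulVec]
  calc e ⬝ᵥ (Aᵀ * (diagonal w)ᵀ * diagonal w * A) *ᵥ e
      = (diagonal w * A) *ᵥ e ⬝ᵥ (diagonal w * A) *ᵥ e := by
        rw [hgram, ← mulVec_mulVec, dotProduct_mulVec, vecMul_transpose]
    _ = ∑ i, w i ^ 2 * (A i ⬝ᵥ e) ^ 2 :=
        Finset.sum_congr rfl fun i _ => by rw [hentry, ← sq, mul_pow]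

theorem dotProduct_extrusionMatrix_mulVec [CommRing R]
    (A : Matrix m n R) (φbarr φbase : m → R) (e : n → R) :
    e ⬝ᵥ extrusionMatrix A φbarr φbase *ᵥ e
      = ∑ i, φbarr i ^ 2 * (A i ⬝ᵥ e) ^ 2 - ∑ i, φbase i ^ 2 * (A i ⬝ᵥ e) ^ 2 := by
  rw [extrusionMatrix, sub_mulVec, dotProduct_sub, dotProduct_weighted_gram_mulVec,
    dotProduct_weighted_gram_mulVec]

theorem dotProduct_extrusionMatrix_mulVec_axis [CommRing R]
    {A : Matrix m n R} {φbarr φbase : m → R} {u : n → R} (hu : u ⬝ᵥ u = 1)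
    (hbarr : ∀ i, φbarr i ≠ 0 → A i ⬝ᵥ u = 0)
    (hbase : ∀ i, φbase i ≠ 0 → A i = u ∨ A i = -u) :
    u ⬝ᵥ extrusionMatrix A φbarr φbase *ᵥ u = -∑ i, φbase i ^ 2 := by
  have hbarr_term (i : m) : φbarr i ^ 2 * (A i ⬝ᵥ u) ^ 2 = 0 := by
    by_cases hi : φbarr i = 0
    · simp [hi]
    · simp [hbarr i hi]
  have hbase_term (i : m) : φbase i ^ 2 * (A i ⬝ᵥ u) ^ 2 = φbase i ^ 2 := by
    by_cases hi : φbase i = 0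
    · simp [hi]
    · rcases hbase i hi with h | h <;> simp [h, hu]
  simp only [dotProduct_extrusionMatrix_mulVec, hbarr_term, hbase_term, Finset.sum_const_zero,
    zero_sub]

variable [CommRing R] [LinearOrder R] [IsStrictOrderedRing R]

theorem sq_dotProduct_le_mul_dotProduct_self (u v : n → R) :
    (u ⬝ᵥ v) ^ 2 ≤ (u ⬝ᵥ u) * (v ⬝ᵥ v) := by
  simpa only [dotProduct, sq] using Finset.sum_mul_sq_le_sq_mul_sq Finset.univ u v

theorem neg_sum_sq_le_dotProduct_extrusionMatrix_mulVec
    {A : Matrix m n R} (φbarr : m → R) {φbase : m → R} {e : n → R} (he : e ⬝ᵥ e = 1)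
    (hA : ∀ i, φbase i ≠ 0 → A i ⬝ᵥ A i ≤ 1) :
    -∑ i, φbase i ^ 2 ≤ e ⬝ᵥ extrusionMatrix A φbarr φbase *ᵥ e := by
  have hbarr_nonneg : 0 ≤ ∑ i, φbarr i ^ 2 * (A i ⬝ᵥ e) ^ 2 :=
    Finset.sum_nonneg fun i _ => by positivity
  have hbase_le : ∑ i, φbase i ^ 2 * (A i ⬝ᵥ e) ^ 2 ≤ ∑ i, φbase i ^ 2 := by
    refine Finset.sum_le_sum fun i _ => ?_
    by_cases hi : φbase i = 0
    · simp [hi]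
    · have hcs : (A i ⬝ᵥ e) ^ 2 ≤ A i ⬝ᵥ A i := by
        simpa only [he, mul_one] using sq_dotProduct_le_mul_dotProduct_self (A i) e
      exact mul_le_of_le_one_right (sq_nonneg _) (hcs.trans (hA i hi))
  rw [dotProduct_extrusionMatrix_mulVec]
  linarith

theorem true_axis_minimizes_weighted_quadratic_form_general
    {A : Matrix m n R} {φbarr φbase : m → R} {u : n → R} (hu : u ⬝ᵥ u = 1)
    (hbarr : ∀ i, φbarr i ≠ 0 → A i ⬝ᵥ u = 0)
    (hbase : ∀ i, φbase i ≠ 0 → A i = u ∨ A i = -u) :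
    u ⬝ᵥ extrusionMatrix A φbarr φbase *ᵥ u = -∑ i, φbase i ^ 2 ∧
      ∀ e : n → R, e ⬝ᵥ e = 1 →
        u ⬝ᵥ extrusionMatrix A φbarr φbase *ᵥ u ≤ e ⬝ᵥ extrusionMatrix A φbarr φbase *ᵥ e := by
  have hvalue := dotProduct_extrusionMatrix_mulVec_axis hu hbarr hbase
  refine ⟨hvalue, fun e he => hvalue.trans_le ?_⟩
  refine neg_sum_sq_le_dotProduct_extrusionMatrix_mulVec φbarr he fun i hi => ?_
  rcases hbase i hi with h | h <;> simp [h, hu]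

end ExtrusionMatrix

theorem sqrt_sum_sq_eq_one_iff_dotProduct_self {n : Type*} [Fintype n] {v : n → ℝ} :
    √(∑ k, v k ^ 2) = 1 ↔ v ⬝ᵥ v = 1 := by
  simp only [Real.sqrt_eq_one, dotProduct, sq]

/-- Suppose the indices are partitioned into barrel indices (rows orthogonal to
the unit axis `e*`) and base indices (rows equal to `±e*`), and the weights `φ^barr` vanish on
base indices while `φ^base` vanish on barrel indices.  Then, for
`H_Φ = NᵀΦ_barrᵀΦ_barr N − NᵀΦ_baseᵀΦ_base N`, we have
`e*ᵀ H_Φ e* = −∑ i (φ^base_i)²` and `e*` globally minimizes the weighted quadratic form over the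
unit sphere. -/
theorem true_axis_minimizes_weighted_quadratic_form
    (N : ℕ) (estar : Fin 3 → ℝ) (hstar : Real.sqrt (∑ k, estar k ^ 2) = 1)
    (Nmat : Matrix (Fin N) (Fin 3) ℝ)
    (hrows : ∀ i, Real.sqrt (∑ k, Nmat i k ^ 2) = 1)
    (base : Finset (Fin N))
    (hbarrel : ∀ i ∉ base, Nmat i ⬝ᵥ estar = 0)
    (hbase : ∀ i ∈ base, Nmat i = estar ∨ Nmat i = -estar)
    (phibarr phibase : Fin N → ℝ)
    (hphibarr : ∀ i ∈ base, phibarr i = 0)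
    (hphibase : ∀ i ∉ base, phibase i = 0)
    (HPhi : Matrix (Fin 3) (Fin 3) ℝ)
    (hHPhi : HPhi = Nmatᵀ * (diagonal phibarr)ᵀ * diagonal phibarr * Nmat
      - Nmatᵀ * (diagonal phibase)ᵀ * diagonal phibase * Nmat) :
    estar ⬝ᵥ HPhi.mulVec estar = -(∑ i, (phibase i) ^ 2) ∧
      ∀ e : Fin 3 → ℝ, Real.sqrt (∑ k, e k ^ 2) = 1 →
        estar ⬝ᵥ HPhi.mulVec estar ≤ e ⬝ᵥ HPhi.mulVec e := by
  simp only [hHPhi, sqrt_sum_sq_eq_one_iff_dotProduct_self] at hstar ⊢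
  exact true_axis_minimizes_weighted_quadratic_form_general hstar
    (fun i hi => hbarrel i (mt (hphibarr i) hi))
    (fun i hi => hbase i (not_imp_comm.mp (hphibase i) hi))
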